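/- Let x_start ≠ x_goal in ℝ^n and c_best > ‖x_goal − x_start‖. Set m = (x_start + x_goal)/2, a = c_best/2, b = √(a² − ‖x_goal − x_start‖²/4), d̂ = (x_goal − x_start)/‖x_goal − x_start‖, and G = a d̂ d̂ᵀ + b (I − d̂ d̂ᵀ). Then the informed set { x ∈ ℝ^n : ‖x − x_start‖ + ‖x − x_goal‖ ≤ c_best } equals the ellipsotope { m + G ξ : ξ ∈ ℝ^n, ‖ξ‖₂ ≤ 1 }. -/

import Mathlib

open Matrix

/-
Put the origin at the midpoint of the foci `±c u`, `‖u‖ = 1`, and let `L` scale the axis `ℝ u` by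
`a` and its orthogonal complement by `b`, where `b² = a² - c²`. For `‖ξ‖ ≤ 1` and `t = ⟪u, ξ⟫`,
`‖L ξ ± c u‖² = (a t ± c)² + b² (‖ξ‖² - t²) ≤ (a ± c t)²`, so the two distances add up to at most
`2a`. Conversely, squaring `‖y + c u‖ ≤ 2a - ‖y - c u‖` twice removes the square roots and leaves
the quadratic inequality saying that `L⁻¹ y` lies in the unit ball. The degenerate case `b = 0`, in
which `L` is not invertible, is covered because then the quadratic inequality forces `y` onto the
axis.
-/

open InnerProductSpace
open scoped RealInnerProductSpace

section

variable {E : Type*} [NormedAddCommGroup E] [InnerProductSpace ℝ E]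

/-- The informed set with start `p`, goal `q` and cost bound `c`: the points through which a path
from `p` to `q` can pass without its length exceeding `c`. -/
def informedSet (p q : E) (c : ℝ) : Set E :=
  {x | ‖x - p‖ + ‖x - q‖ ≤ c}

/-- The unconstrained ellipsotope of index `2` with center `m`. Its generator matrix is encoded as a
continuous linear map `G`, so that the notion makes sense without coordinates. -/
def ellipsotope (m : E) (G : E →L[ℝ] E) : Set E :=
  {x | ∃ ξ, ‖ξ‖ ≤ 1 ∧ x = m + G ξ}

/-- The map `a u uᵀ + b (I - u uᵀ)`, the generator of a spheroid: for a unit vector `u` it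
scales the axis `ℝ u` by `a` and the orthogonal complement of the axis by `b`. -/
noncomputable def axialScaling (u : E) (a b : ℝ) : E →L[ℝ] E :=
  a • rankOne ℝ u u + b • (1 - rankOne ℝ u u)

theorem axialScaling_apply (u ξ : E) (a b : ℝ) :
    axialScaling u a b ξ = (a * ⟪u, ξ⟫) • u + b • (ξ - ⟪u, ξ⟫ • u) := by
  simp [axialScaling, mul_smul]

theorem axialScaling_one_one (u : E) : axialScaling u 1 1 = 1 := by
  simp [axialScaling]

theorem inner_axialScaling {u : E} (hu : ‖u‖ = 1) (a b : ℝ) (z : E) :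
    ⟪u, axialScaling u a b z⟫ = a * ⟪u, z⟫ := by
  simp [axialScaling_apply, inner_add_right, inner_sub_right, real_inner_smul_right, hu]

theorem axialScaling_axialScaling {u : E} (hu : ‖u‖ = 1) (a b a' b' : ℝ) (z : E) :
    axialScaling u a b (axialScaling u a' b' z) = axialScaling u (a * a') (b * b') z := by
  rw [axialScaling_apply, inner_axialScaling hu, axialScaling_apply, axialScaling_apply]
  module

theorem norm_sq_axialScaling {u : E} (hu : ‖u‖ = 1) (a b : ℝ) (z : E) :
    ‖axialScaling u a b z‖ ^ 2 = (a * ⟪u, z⟫) ^ 2 + b ^ 2 * (‖z‖ ^ 2 - ⟪u, z⟫ ^ 2) := by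
  simp only [axialScaling_apply, ← real_inner_self_eq_norm_sq, inner_add_left, inner_add_right,
    inner_sub_left, inner_sub_right, real_inner_smul_left, real_inner_smul_right,
    real_inner_comm u z, inner_self_eq_one_of_norm_eq_one hu]
  ring

theorem norm_sq_axialScaling_add_smul {u : E} (hu : ‖u‖ = 1) (a b c : ℝ) (z : E) :
    ‖axialScaling u a b z + c • u‖ ^ 2
      = (a * ⟪u, z⟫ + c) ^ 2 + b ^ 2 * (‖z‖ ^ 2 - ⟪u, z⟫ ^ 2) := by
  rw [norm_add_sq_real, norm_sq_axialScaling hu, real_inner_smul_right, real_inner_comm u,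
    inner_axialScaling hu, norm_smul, hu, mul_one, Real.norm_eq_abs, sq_abs]
  ring

theorem norm_axialScaling_add_smul_le {u ξ : E} (hu : ‖u‖ = 1) (hξ : ‖ξ‖ ≤ 1) {a b c : ℝ}
    (ha : 0 ≤ a) (hb : b ^ 2 = a ^ 2 - c ^ 2) :
    ‖axialScaling u a b ξ + c • u‖ ≤ a + c * ⟪u, ξ⟫ := by
  have hca : |c| ≤ a := abs_le_of_sq_le_sq (by linarith [sq_nonneg b]) ha
  have h_inner : |⟪u, ξ⟫| ≤ 1 :=
    (abs_real_inner_le_norm u ξ).trans (by rwa [hu, one_mul])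
  have h_nonneg : 0 ≤ a + c * ⟪u, ξ⟫ := by
    have h_shift : |c * ⟪u, ξ⟫| ≤ a := by
      rw [abs_mul]
      exact (mul_le_of_le_one_right (abs_nonneg c) h_inner).trans hca
    linarith [neg_abs_le (c * ⟪u, ξ⟫)]
  refine le_of_sq_le_sq ?_ h_nonneg
  calc ‖axialScaling u a b ξ + c • u‖ ^ 2
      = (a * ⟪u, ξ⟫ + c) ^ 2 + b ^ 2 * (‖ξ‖ ^ 2 - ⟪u, ξ⟫ ^ 2) :=
        norm_sq_axialScaling_add_smul hu a b c ξ
    _ ≤ (a * ⟪u, ξ⟫ + c) ^ 2 + b ^ 2 * (1 - ⟪u, ξ⟫ ^ 2) := by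
        gcongr
        exact pow_le_one₀ (norm_nonneg ξ) hξ
    _ = (a + c * ⟪u, ξ⟫) ^ 2 := by rw [hb]; ring

theorem norm_le_of_norm_add_add_norm_sub_le {y f : E} {a : ℝ}
    (h : ‖y + f‖ + ‖y - f‖ ≤ 2 * a) : ‖y‖ ≤ a := by
  have h_two : 2 * ‖y‖ ≤ ‖y + f‖ + ‖y - f‖ :=
    calc 2 * ‖y‖ = ‖(y + f) + (y - f)‖ := by
          rw [add_add_sub_cancel, ← two_smul ℝ y, norm_smul, Real.norm_two]
      _ ≤ ‖y + f‖ + ‖y - f‖ := norm_add_le _ _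
  linarith

theorem sq_mul_norm_sq_sub_inner_sq_le_of_norm_add_add_norm_sub_le {y f : E} {a : ℝ}
    (h : ‖y + f‖ + ‖y - f‖ ≤ 2 * a) :
    a ^ 2 * ‖y‖ ^ 2 - ⟪y, f⟫ ^ 2 ≤ a ^ 2 * (a ^ 2 - ‖f‖ ^ 2) := by
  have ha : 0 ≤ a := (norm_nonneg y).trans (norm_le_of_norm_add_add_norm_sub_le h)
  have h_add := norm_add_sq_real y f
  have h_sub := norm_sub_sq_real y f
  have h_first_squaring : ‖y + f‖ ^ 2 ≤ (2 * a - ‖y - f‖) ^ 2 :=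
    pow_le_pow_left₀ (norm_nonneg _) (by linarith) 2
  have h_distance : a * ‖y - f‖ ≤ a ^ 2 - ⟪y, f⟫ := by linarith
  have h_second_squaring : (a * ‖y - f‖) ^ 2 ≤ (a ^ 2 - ⟪y, f⟫) ^ 2 :=
    pow_le_pow_left₀ (by positivity) h_distance 2
  rw [mul_pow, h_sub] at h_second_squaring
  linarith

theorem axialScaling_one_left_eq_self_of_norm_sq_le {u y : E} (hu : ‖u‖ = 1)
    (h_onAxis : ‖y‖ ^ 2 ≤ ⟪u, y⟫ ^ 2) (b : ℝ) : axialScaling u 1 b y = y := by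
  have h_norm := norm_sq_axialScaling hu 0 1 y
  simp only [axialScaling_apply, zero_mul, zero_smul, one_smul, zero_add] at h_norm
  have h_transverse : y - ⟪u, y⟫ • u = 0 := by
    rw [← norm_eq_zero, ← sq_eq_zero_iff]
    exact le_antisymm (by linarith) (sq_nonneg _)
  rw [axialScaling_apply, one_mul, h_transverse, smul_zero, add_zero, ← sub_eq_zero.mp h_transverse]

theorem exists_norm_le_one_eq_axialScaling {u y : E} (hu : ‖u‖ = 1) {a b : ℝ} (ha : 0 < a)
    (h_axis : ⟪u, y⟫ ^ 2 ≤ a ^ 2)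
    (h_quad : a ^ 2 * (‖y‖ ^ 2 - ⟪u, y⟫ ^ 2) ≤ b ^ 2 * (a ^ 2 - ⟪u, y⟫ ^ 2)) :
    ∃ ξ, ‖ξ‖ ≤ 1 ∧ y = axialScaling u a b ξ := by
  -- For `b = 0` the junk value `b⁻¹ = 0` is the right coefficient, `y` being on the axis.
  refine ⟨axialScaling u a⁻¹ b⁻¹ y, ?_, ?_⟩
  · have h_transverse : b⁻¹ ^ 2 * (‖y‖ ^ 2 - ⟪u, y⟫ ^ 2) ≤ 1 - (a⁻¹ * ⟪u, y⟫) ^ 2 := by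
      have h_scaled : ‖y‖ ^ 2 - ⟪u, y⟫ ^ 2 ≤ b ^ 2 * (1 - (a⁻¹ * ⟪u, y⟫) ^ 2) := by
        refine le_of_mul_le_mul_left (h_quad.trans_eq ?_) (by positivity : 0 < a ^ 2)
        field_simp
      rcases eq_or_ne b 0 with rfl | hb
      · simpa [mul_pow] using inv_mul_le_one_of_le₀ h_axis (sq_nonneg a)
      · rwa [inv_pow, inv_mul_le_iff₀ (by positivity)]
    refine le_of_sq_le_sq ?_ zero_le_one
    rw [norm_sq_axialScaling hu]
    linarith
  · rw [axialScaling_axialScaling hu, mul_inv_cancel₀ ha.ne']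
    rcases eq_or_ne b 0 with rfl | hb
    · rw [zero_pow two_ne_zero, zero_mul] at h_quad
      have h_onAxis : ‖y‖ ^ 2 ≤ ⟪u, y⟫ ^ 2 :=
        sub_nonpos.mp (nonpos_of_mul_nonpos_right h_quad (by positivity))
      rw [axialScaling_one_left_eq_self_of_norm_sq_le hu h_onAxis]
    · rw [mul_inv_cancel₀ hb, axialScaling_one_one, one_apply_eq_self]

theorem norm_add_smul_add_norm_sub_smul_le_iff {u : E} (hu : ‖u‖ = 1) {a b c : ℝ} (ha : 0 < a)
    (hb : b ^ 2 = a ^ 2 - c ^ 2) (y : E) :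
    ‖y + c • u‖ + ‖y - c • u‖ ≤ 2 * a ↔ ∃ ξ, ‖ξ‖ ≤ 1 ∧ y = axialScaling u a b ξ := by
  constructor
  · intro h
    have h_axis : ⟪u, y⟫ ^ 2 ≤ a ^ 2 := by
      refine sq_le_sq.mpr ((abs_real_inner_le_norm u y).trans ?_)
      rw [hu, one_mul]
      exact (norm_le_of_norm_add_add_norm_sub_le h).trans (le_abs_self a)
    have h_quad := sq_mul_norm_sq_sub_inner_sq_le_of_norm_add_add_norm_sub_le h
    rw [real_inner_smul_right, real_inner_comm, norm_smul, hu, mul_one, Real.norm_eq_abs, sq_abs]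
      at h_quad
    exact exists_norm_le_one_eq_axialScaling hu ha h_axis (by rw [hb]; linarith)
  · rintro ⟨ξ, hξ, rfl⟩
    have h_add := norm_axialScaling_add_smul_le hu hξ ha.le hb
    have h_sub := norm_axialScaling_add_smul_le hu hξ (c := -c) ha.le (by rw [hb, neg_sq])
    rw [neg_smul, ← sub_eq_add_neg] at h_sub
    linarith

theorem informedSet_eq_ellipsotope_general {p q : E} (hne : p ≠ q) {c : ℝ} (hc : ‖q - p‖ ≤ c) :
    informedSet p q c = ellipsotope ((1 / 2 : ℝ) • (p + q))
      (axialScaling (‖q - p‖⁻¹ • (q - p)) (c / 2) √((c / 2) ^ 2 - ‖q - p‖ ^ 2 / 4)) := by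
  have h_sub_ne : q - p ≠ 0 := sub_ne_zero.mpr hne.symm
  have h_dist : 0 < ‖q - p‖ := norm_pos_iff.mpr h_sub_ne
  set u := ‖q - p‖⁻¹ • (q - p) with hu_def
  have hu : ‖u‖ = 1 := norm_smul_inv_norm (𝕜 := ℝ) h_sub_ne
  have h_focus : (‖q - p‖ / 2) • u = (1 / 2 : ℝ) • (q - p) := by
    rw [hu_def, smul_smul]
    congr 1
    field_simp
  have h_minor : √((c / 2) ^ 2 - ‖q - p‖ ^ 2 / 4) ^ 2 = (c / 2) ^ 2 - (‖q - p‖ / 2) ^ 2 := by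
    rw [Real.sq_sqrt (by nlinarith)]
    ring
  ext x
  have h_iff := norm_add_smul_add_norm_sub_smul_le_iff hu (a := c / 2) (by linarith) h_minor
    (x - (1 / 2 : ℝ) • (p + q))
  have h_start : x - (1 / 2 : ℝ) • (p + q) + (1 / 2 : ℝ) • (q - p) = x - p := by module
  have h_goal : x - (1 / 2 : ℝ) • (p + q) - (1 / 2 : ℝ) • (q - p) = x - q := by module
  rw [h_focus, h_start, h_goal, mul_div_cancel₀ c two_ne_zero] at h_iff
  simpa only [informedSet, ellipsotope, Set.mem_ofPred_eq, sub_eq_iff_eq_add'] using h_iff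

end

theorem axialScaling_apply_eq_mulVec {ι : Type*} [Fintype ι] [DecidableEq ι]
    (u ξ : EuclideanSpace ℝ ι) (a b : ℝ) :
    axialScaling u a b ξ =
      WithLp.toLp 2 ((a • vecMulVec u u + b • (1 - vecMulVec u u) : Matrix ι ι ℝ) *ᵥ ξ) := by
  have h_inner : ⟪u, ξ⟫ = u ⬝ᵥ ξ := by
    simp [EuclideanSpace.inner_eq_star_dotProduct, dotProduct_comm]
  ext i
  simp [axialScaling_apply, h_inner, add_mulVec, smul_mulVec, sub_mulVec, vecMulVec_mulVec,
    mul_assoc]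

/-- The informed set `{ x : ‖x − x_start‖ + ‖x − x_goal‖ ≤ c_best }` equals the
ellipsotope `E₂(m, G) = { m + G ξ : ‖ξ‖₂ ≤ 1 }` with center
`m = (x_start + x_goal)/2` and generator matrix
`G = a d̂ d̂ᵀ + b (I − d̂ d̂ᵀ)`. -/
theorem informedSet_eq_ellipsotope {n : ℕ}
    (xstart xgoal : EuclideanSpace ℝ (Fin n)) (hne : xstart ≠ xgoal)
    (cbest : ℝ) (hc : ‖xgoal - xstart‖ < cbest)
    (m : EuclideanSpace ℝ (Fin n)) (hm : m = (1 / 2 : ℝ) • (xstart + xgoal))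
    (a : ℝ) (ha : a = cbest / 2)
    (b : ℝ) (hb : b = Real.sqrt (a ^ 2 - ‖xgoal - xstart‖ ^ 2 / 4))
    (dhat : Fin n → ℝ) (hd : dhat = ‖xgoal - xstart‖⁻¹ • (xgoal - xstart))
    (G : Matrix (Fin n) (Fin n) ℝ)
    (hG : G = a • Matrix.vecMulVec dhat dhat + b • (1 - Matrix.vecMulVec dhat dhat)) :
    {x : EuclideanSpace ℝ (Fin n) | ‖x - xstart‖ + ‖x - xgoal‖ ≤ cbest} =
      {x : EuclideanSpace ℝ (Fin n) | ∃ ξ : EuclideanSpace ℝ (Fin n),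
        ‖ξ‖ ≤ 1 ∧ x = m + (show EuclideanSpace ℝ (Fin n) from WithLp.toLp 2 (G *ᵥ ξ))} := by
  subst hG hd hb ha hm
  simpa only [informedSet, ellipsotope, axialScaling_apply_eq_mulVec, WithLp.ofLp_smul,
    WithLp.ofLp_sub]
    using informedSet_eq_ellipsotope_general hne hc.le
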